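/- arXiv:2502.02925 — 2 statements merged into one kernel-verified Lean document; each statement's English description precedes it below -/
import Mathlib

section
/- Let ν ∈ P_{2,0}(ℝ^d) and let D ⊂ P_2(ℝ^d) be a cone (λ_#μ ∈ D for all μ ∈ D and λ ≥ 0). Let μ* be a maximizer of Var over D ∩ M_ν^K, where M_ν^K = {μ ∈ P_2(ℝ^d) : μ ≼_K ν}, and let π* be a maximizer of ∫⟨x,y⟩ dπ over Π(μ*, ν). Then ∫⟨x,y⟩ dπ*(x,y) = ∫|x|² dμ*(x). If in addition D is translation invariant ((T_k)_#μ ∈ D for all μ ∈ D and k ∈ ℝ^d), then μ* is centered: ∫x dμ*(x) = 0. -/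
/-!
Write `A = ∫⟨x, y⟩ dπ*` and let `m` be the barycenter of `μ*`. The point is the inequality
`A ≤ ∫ |x - k|² dμ*` for every `k` such that the translate of `μ*` by `-k` lies in `D`
(`integral_inner_le`). If it failed, then, with `C = ∫ |x - k|² dμ*` and `c = A / C > 1`, the law
of `c (x - k)` would lie in `D` and be Kantorovich dominated by `ν`: since `ν` is centered, the
coupling `(c (x - k), y)` gives `c A - c² C = 0`. Its variance is `c² Var μ*`, which exceeds
`Var μ*`, a contradiction. Here `Var μ* > 0`, and hence `C ≥ Var μ* > 0`, because `Var μ* = 0`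
forces `x = m` almost surely and then `A = ⟨m, ∫ y dν⟩ = 0`.

Taking `k = 0` gives `A ≤ ∫ |x|² dμ*`; the reverse inequality holds because the coupling
witnessing `μ* ≼_K ν` has `∫⟨x, y⟩ = ∫ |x|² dμ*` and `π*` is optimal. Taking `k = m` when `D` is
translation invariant gives `∫ |x|² dμ* = A ≤ ∫ |x - m|² dμ* = ∫ |x|² dμ* - |m|²`, so `m = 0`.
-/


open MeasureTheory Filter
open scoped RealInnerProductSpace Topology

noncomputable section

/-- `Rd d` is the Euclidean space `ℝ^d`. -/
abbrev Rd (d : ℕ) := EuclideanSpace ℝ (Fin d)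

/-- A measure has finite second moment if `x ↦ ‖x‖²` is integrable. -/
def FiniteSecondMoment {d : ℕ} (μ : Measure (Rd d)) : Prop :=
  Integrable (fun x => ‖x‖ ^ 2) μ

/-- `π` is a coupling of `μ` and `ν` if its marginals are `μ` and `ν`. -/
def IsCoupling {d : ℕ} (π : Measure (Rd d × Rd d)) (μ ν : Measure (Rd d)) : Prop :=
  π.map Prod.fst = μ ∧ π.map Prod.snd = ν

/-- The squared 2-Wasserstein distance: `W₂²(μ,ν) = inf_{π ∈ Π(μ,ν)} ∫ |x-y|² dπ`. -/
def W2sq {d : ℕ} (μ ν : Measure (Rd d)) : ℝ :=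
  sInf ((fun π : Measure (Rd d × Rd d) => ∫ p, ‖p.1 - p.2‖ ^ 2 ∂π) ''
    {π | IsCoupling π μ ν})

/-- The 2-Wasserstein distance. -/
def W2 {d : ℕ} (μ ν : Measure (Rd d)) : ℝ := Real.sqrt (W2sq μ ν)

/-- The variance of a measure: `Var(μ) = ∫ |x - ∫ x dμ|² dμ(x)`. -/
def Var {d : ℕ} (μ : Measure (Rd d)) : ℝ := ∫ x, ‖x - ∫ y, y ∂μ‖ ^ 2 ∂μ

/-- Convex order: `μ ≤_c ν` iff `∫ f dμ ≤ ∫ f dν` for every (integrable) convex `f`. -/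
def ConvexOrder {d : ℕ} (μ ν : Measure (Rd d)) : Prop :=
  ∀ f : Rd d → ℝ, ConvexOn ℝ Set.univ f → Integrable f μ → Integrable f ν →
    ∫ x, f x ∂μ ≤ ∫ x, f x ∂ν

/-- Kantorovich dominance: `μ ≼_K ν` iff there is a coupling `π` of `μ` and `ν` with
`∫ ⟨x - b_ν, y - x⟩ dπ = 0`, where `b_ν` is the barycenter of `ν`. -/
def KDom {d : ℕ} (μ ν : Measure (Rd d)) : Prop :=
  ∃ π : Measure (Rd d × Rd d), IsCoupling π μ ν ∧
    (∫ p : Rd d × Rd d, ⟪p.1 - ∫ y, y ∂ν, p.2 - p.1⟫ ∂π) = 0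

lemma FiniteSecondMoment.memLp {d : ℕ} {μ : Measure (Rd d)} (h : FiniteSecondMoment μ) :
    MemLp (fun x => x) 2 μ :=
  (memLp_two_iff_integrable_sq_norm (by fun_prop)).2 h

lemma IsCoupling.memLp_fst {d : ℕ} {π : Measure (Rd d × Rd d)} {μ ν : Measure (Rd d)}
    (hπ : IsCoupling π μ ν) (h : FiniteSecondMoment μ) : MemLp (fun p => p.1) 2 π := by
  have h1 := h.memLp
  rw [← hπ.1] at h1
  exact h1.comp_of_map (by fun_prop)

lemma IsCoupling.memLp_snd {d : ℕ} {π : Measure (Rd d × Rd d)} {μ ν : Measure (Rd d)}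
    (hπ : IsCoupling π μ ν) (h : FiniteSecondMoment ν) : MemLp (fun p => p.2) 2 π := by
  have h1 := h.memLp
  rw [← hπ.2] at h1
  exact h1.comp_of_map (by fun_prop)

lemma IsCoupling.isProbabilityMeasure {d : ℕ} {π : Measure (Rd d × Rd d)} {μ ν : Measure (Rd d)}
    (hπ : IsCoupling π μ ν) [IsProbabilityMeasure μ] : IsProbabilityMeasure π := by
  have : IsProbabilityMeasure (π.map Prod.fst) := by rw [hπ.1]; infer_instance
  exact Measure.isProbabilityMeasure_of_map (μ := π) Prod.fst

lemma IsCoupling.integral_fst {d : ℕ}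
    {π : Measure (Rd d × Rd d)} {μ ν : Measure (Rd d)}
    (hπ : IsCoupling π μ ν) {f : Rd d → ℝ} (hf : Continuous f) :
    ∫ p, f p.1 ∂π = ∫ x, f x ∂μ := by
  rw [← hπ.1, integral_map (by fun_prop) hf.aestronglyMeasurable]

lemma IsCoupling.integral_snd {d : ℕ}
    {π : Measure (Rd d × Rd d)} {μ ν : Measure (Rd d)}
    (hπ : IsCoupling π μ ν) : ∫ p, p.2 ∂π = ∫ y, y ∂ν := by
  rw [← hπ.2, integral_map (by fun_prop) (by fun_prop)]

lemma integrable_inner_of_memLp {d : ℕ} {Ω : Type*} [MeasurableSpace Ω] {P : Measure Ω}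
    {X Y : Ω → Rd d} (hX : MemLp X 2 P) (hY : MemLp Y 2 P) :
    Integrable (fun ω => ⟪X ω, Y ω⟫) P := by
  refine (hX.norm.integrable_mul hY.norm).mono (hX.1.inner hY.1) (ae_of_all _ fun ω => ?_)
  simpa using abs_real_inner_le_norm (X ω) (Y ω)

/-- The bias-variance decomposition. -/
lemma integral_norm_sub_sq {d : ℕ} {μ : Measure (Rd d)} [IsProbabilityMeasure μ]
    (h : FiniteSecondMoment μ) (k : Rd d) :
    ∫ x, ‖x - k‖ ^ 2 ∂μ = Var μ + ‖(∫ x, x ∂μ) - k‖ ^ 2 := by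
  have hx : Integrable (fun x => x) μ := h.memLp.integrable (by norm_num)
  set m := ∫ x, x ∂μ with hm
  have hxm : Integrable (fun x => x - m) μ := hx.sub (integrable_const m)
  have hV : Integrable (fun x => ‖x - m‖ ^ 2) μ :=
    (memLp_two_iff_integrable_sq_norm (by fun_prop)).1 (h.memLp.sub (memLp_const m))
  have hI : Integrable (fun x => 2 * ⟪m - k, x - m⟫) μ := (hxm.const_inner _).const_mul 2
  have h0 : ∫ x, x - m ∂μ = 0 := by
    rw [integral_sub hx (integrable_const m)]; simp [hm]
  have e : ∀ x : Rd d, ‖x - k‖ ^ 2 = ‖x - m‖ ^ 2 + 2 * ⟪m - k, x - m⟫ + ‖m - k‖ ^ 2 := by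
    intro x
    have : x - k = (x - m) + (m - k) := by abel
    rw [this, norm_add_sq_real, real_inner_comm]
  rw [integral_congr_ae (ae_of_all _ e),
    integral_add (by exact hV.add hI) (integrable_const _), integral_add hV hI, integral_const_mul,
    integral_inner hxm, h0]
  simp [Var, hm]

lemma var_map_smul_sub {d : ℕ} {μ : Measure (Rd d)} [IsProbabilityMeasure μ]
    (h : FiniteSecondMoment μ) (c : ℝ) (k : Rd d) :
    Var (μ.map (fun x => c • (x - k))) = c ^ 2 * Var μ := by
  have hx : Integrable (fun x => x) μ := h.memLp.integrable (by norm_num)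
  have hmean : ∫ y, y ∂(μ.map (fun x => c • (x - k))) = c • ((∫ x, x ∂μ) - k) := by
    rw [integral_map (by fun_prop) (by fun_prop), integral_smul,
      integral_sub hx (integrable_const k)]
    simp
  unfold Var
  rw [hmean, integral_map (by fun_prop) (by fun_prop), ← integral_const_mul]
  congr 1
  ext x
  rw [← smul_sub, norm_smul, mul_pow, sub_sub_sub_cancel_right]
  simp

/-- Optimality of `μ` bounds the correlation of any coupling of `μ` and `ν` by the second moment
of `μ` about every point `k` for which the translate of `μ` by `-k`, and hence each of its
dilations, is admissible. -/
lemma integral_inner_le {d : ℕ} {μ ν : Measure (Rd d)} [IsProbabilityMeasure μ]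
    (hμ2 : FiniteSecondMoment μ) (hν2 : FiniteSecondMoment ν) (hν0 : (∫ y, y ∂ν) = 0)
    {π : Measure (Rd d × Rd d)} (hπ : IsCoupling π μ ν) (k : Rd d)
    (hmax : ∀ c : ℝ, 0 ≤ c → KDom (μ.map (fun x => c • (x - k))) ν →
      Var (μ.map (fun x => c • (x - k))) ≤ Var μ) :
    (∫ p : Rd d × Rd d, ⟪p.1, p.2⟫ ∂π) ≤ ∫ x, ‖x - k‖ ^ 2 ∂μ := by
  have hP := hπ.isProbabilityMeasure
  have hX := hπ.memLp_fst hμ2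
  have hY := hπ.memLp_snd hν2
  have hYi : Integrable (fun p : Rd d × Rd d => p.2) π := hY.integrable (by norm_num)
  have hY0 : ∀ a : Rd d, ∫ p : Rd d × Rd d, ⟪a, p.2⟫ ∂π = 0 := fun a => by
    rw [integral_inner hYi, hπ.integral_snd, hν0, inner_zero_right]
  by_contra! hlt
  set A := ∫ p : Rd d × Rd d, ⟪p.1, p.2⟫ ∂π with hA
  set C := ∫ x, ‖x - k‖ ^ 2 ∂μ with hC
  have hC0 : 0 ≤ C := integral_nonneg fun x => by positivity
  have hV0 : 0 ≤ Var μ := integral_nonneg fun x => by positivity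
  have hVpos : 0 < Var μ := by
    refine hV0.lt_of_ne' fun hV => ?_
    set m := ∫ x, x ∂μ with hm
    have hVπ : ∫ p : Rd d × Rd d, ‖p.1 - m‖ ^ 2 ∂π = 0 := by
      rw [hπ.integral_fst (f := fun x => ‖x - m‖ ^ 2) (by fun_prop)]
      exact hV
    have hae := (integral_eq_zero_iff_of_nonneg (fun p => by positivity)
      ((memLp_two_iff_integrable_sq_norm (by fun_prop)).1 (hX.sub (memLp_const m)))).1 hVπ
    have : A = 0 := by
      rw [hA, ← hY0 m]
      refine integral_congr_ae ?_
      filter_upwards [hae] with p hp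
      have : p.1 = m := by simpa [sub_eq_zero] using hp
      rw [this]
    linarith
  have hCpos : 0 < C := by
    rw [hC, integral_norm_sub_sq hμ2 k]; positivity
  have hc : 1 < A / C := (one_lt_div hCpos).2 hlt
  set c := A / C with hcdef
  have hK : KDom (μ.map (fun x => c • (x - k))) ν := by
    refine ⟨π.map (fun p => (c • (p.1 - k), p.2)), ⟨?_, ?_⟩, ?_⟩
    · rw [Measure.map_map (by fun_prop) (by fun_prop), ← hπ.1,
        Measure.map_map (by fun_prop) (by fun_prop)]
      rfl
    · rw [Measure.map_map (by fun_prop) (by fun_prop), ← hπ.2]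
      rfl
    · rw [hν0, integral_map (by fun_prop) (by fun_prop)]
      have e : ∀ p : Rd d × Rd d, ⟪c • (p.1 - k) - 0, p.2 - c • (p.1 - k)⟫
          = c * ⟪p.1, p.2⟫ - c * ⟪k, p.2⟫ - c ^ 2 * ‖p.1 - k‖ ^ 2 := by
        intro p
        rw [sub_zero, inner_sub_right, real_inner_smul_left, real_inner_smul_left,
          real_inner_smul_right, real_inner_self_eq_norm_sq, inner_sub_left]
        ring
      simp_rw [e]
      have i1 := (integrable_inner_of_memLp hX hY).const_mul c
      have i2 := (hYi.const_inner k).const_mul c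
      have i3 : Integrable (fun p : Rd d × Rd d => c ^ 2 * ‖p.1 - k‖ ^ 2) π :=
        ((memLp_two_iff_integrable_sq_norm (by fun_prop)).1
        (hX.sub (memLp_const k))).const_mul (c ^ 2)
      have hCπ := hπ.integral_fst (f := fun x => ‖x - k‖ ^ 2) (by fun_prop)
      rw [integral_sub (by exact i1.sub i2) i3, integral_sub i1 i2, integral_const_mul,
        integral_const_mul, integral_const_mul, hY0, hCπ, ← hA, ← hC, hcdef]
      field_simp
      ring
  have hle := hmax c (by linarith) hK
  rw [var_map_smul_sub hμ2] at hle
  nlinarith [mul_pos hVpos (by nlinarith : 0 < c ^ 2 - 1)]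

/-- If `D` is a cone, `μ*` maximizes `Var` over `D ∩ M_ν^K`, and `π*` maximizes `∫⟨x,y⟩dπ`
over `Π(μ*,ν)`, then `∫⟨x,y⟩dπ* = ∫|x|²dμ*`; if moreover `D` is translation invariant, then
`μ*` is centered. -/
theorem stmt_17 {d : ℕ} (ν : Measure (Rd d)) [IsProbabilityMeasure ν]
    (hν2 : FiniteSecondMoment ν) (hν0 : (∫ y, y ∂ν) = 0)
    (D : Set (Measure (Rd d)))
    (hD : ∀ ρ ∈ D, IsProbabilityMeasure ρ ∧ FiniteSecondMoment ρ)
    (hcone : ∀ μ ∈ D, ∀ c : ℝ, 0 ≤ c → μ.map (fun x => c • x) ∈ D)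
    (μstar : Measure (Rd d)) (hμD : μstar ∈ D) (hμK : KDom μstar ν)
    (hmax : ∀ ρ ∈ D, KDom ρ ν → Var ρ ≤ Var μstar)
    (πstar : Measure (Rd d × Rd d)) (hπ : IsCoupling πstar μstar ν)
    (hπmax : ∀ π : Measure (Rd d × Rd d), IsCoupling π μstar ν →
      (∫ p : Rd d × Rd d, ⟪p.1, p.2⟫ ∂π) ≤ ∫ p : Rd d × Rd d, ⟪p.1, p.2⟫ ∂πstar) :
    (∫ p : Rd d × Rd d, ⟪p.1, p.2⟫ ∂πstar) = (∫ x, ‖x‖ ^ 2 ∂μstar) ∧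
      ((∀ μ ∈ D, ∀ k : Rd d, μ.map (fun x => x + k) ∈ D) → (∫ x, x ∂μstar) = 0) := by
  obtain ⟨hμP, hμ2⟩ := hD μstar hμD
  have hge : (∫ x, ‖x‖ ^ 2 ∂μstar) ≤ ∫ p : Rd d × Rd d, ⟪p.1, p.2⟫ ∂πstar := by
    obtain ⟨π, hπc, h0⟩ := hμK
    have hX := hπc.memLp_fst hμ2
    have hY := hπc.memLp_snd hν2
    have e : ∀ p : Rd d × Rd d, ⟪p.1 - 0, p.2 - p.1⟫ = ⟪p.1, p.2⟫ - ‖p.1‖ ^ 2 := fun p => by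
      rw [sub_zero, inner_sub_right, real_inner_self_eq_norm_sq]
    rw [hν0] at h0
    simp_rw [e] at h0
    rw [integral_sub (integrable_inner_of_memLp hX hY)
      ((memLp_two_iff_integrable_sq_norm hX.1).1 hX),
      hπc.integral_fst (f := fun x => ‖x‖ ^ 2) (by fun_prop)] at h0
    linarith [hπmax π hπc]
  have hle : (∫ p : Rd d × Rd d, ⟪p.1, p.2⟫ ∂πstar) ≤ ∫ x, ‖x‖ ^ 2 ∂μstar := by
    have := integral_inner_le hμ2 hν2 hν0 hπ 0 fun c hc hK =>
      hmax _ (by simpa using hcone μstar hμD c hc) hK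
    simpa using this
  refine ⟨le_antisymm hle hge, fun htrans => ?_⟩
  set m := ∫ x, x ∂μstar with hm
  have hlem := integral_inner_le hμ2 hν2 hν0 hπ m fun c hc hK => by
    refine hmax _ ?_ hK
    have := hcone _ (htrans μstar hμD (-m)) c hc
    rw [Measure.map_map (by fun_prop) (by fun_prop)] at this
    simpa [Function.comp_def, sub_eq_add_neg] using this
  have h1 := integral_norm_sub_sq hμ2 m
  have h2 := integral_norm_sub_sq hμ2 0
  simp only [← hm, sub_self, sub_zero, norm_zero] at h1 h2
  have : ‖m‖ ^ 2 ≤ 0 := by linarith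
  exact norm_eq_zero.1 (pow_eq_zero_iff two_ne_zero |>.1 (le_antisymm this (by positivity)))
end
end

section
/- Let Ω ⊂ ℝ^d be compact and convex with 0 ∈ Ω, let ν ∈ P_{2,0}(Ω), and let D ⊂ P_2(Ω) be closed under weak optimizers, meaning: for any maximizer μ of Var over D ∩ M_{ν,Ω}^K there exists a coupling π ∈ Π(μ,ν) such that ∫⟨x,y⟩ dπ(x,y) ≥ ∫|x|² dμ(x) and (c_π)_#μ ∈ D, where c_π(x) = ∫y dπ_x(y) is the conditional barycenter map of the disintegration π = μ ⊗ π_x. Then every maximizer μ of Var over D ∩ M_{ν,Ω}^K satisfies μ ≤_c ν (convex order), and consequently μ also solves max{ Var(μ) : μ ∈ D, μ ≤_c ν }. -/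
/-!
Write `c = c_π` for the barycenter map of the coupling `π` provided by closedness under weak
optimizers. The coupling `(c, id)_# π` shows that `c_# μ` is Kantorovich-dominated by `ν`, so
maximality of `μ` gives `∫ |c|² dμ = Var (c_# μ) ≤ Var μ ≤ ∫ |x|² dμ`. Together with
`∫ |x|² dμ ≤ ∫ ⟨x, y⟩ dπ = ∫ ⟨x, c⟩ dμ` this yields `∫ |x - c|² dμ ≤ 0`, so `c = id` holds
`μ`-almost everywhere. Then `π` is a martingale coupling, and Jensen's inequality
(`convexOrder_of_condBary_eq`) gives the convex order.

For the second claim, every `ρ ≤_c ν` concentrated on `Ω` has to be admissible, that is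
`ρ ≼_K ν` (`KDom_of_convexOrder`). This is a duality argument: a coupling with
`∫ ⟨x, y - x⟩ dπ = 0` exists as soon as `f x + g y + t ⟨x, y - x⟩ ≥ 0` on `Ω × Ω` forces
`∫ f dρ + ∫ g dν ≥ 0` (`exists_coupling_of_nonneg`). For `t < 0` the convex function
`φ y = sup_x (-t ⟨x, y - x⟩ - f x)` satisfies `φ ≤ g` and `-f ≤ φ` on `Ω`, whence
`-∫ f dρ ≤ ∫ φ dρ ≤ ∫ φ dν ≤ ∫ g dν`.
-/


open MeasureTheory Filter
open scoped RealInnerProductSpace Topology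

noncomputable section

/-- Membership in `M_{ν,Ω}^K = {μ ∈ P₂(Ω) : μ ≼_K ν}`: a probability measure with finite
second moment, concentrated on `Ω`, Kantorovich-dominated by `ν`. -/
def MemMK {d : ℕ} (Ω : Set (Rd d)) (ν μ : Measure (Rd d)) : Prop :=
  IsProbabilityMeasure μ ∧ FiniteSecondMoment μ ∧ μ Ωᶜ = 0 ∧ KDom μ ν

/-- The `π`-conditional barycentric map `c_π(x) = ∫ y dπ_x(y)`, where `π = μ ⊗ π_x` is the
disintegration of `π` with respect to its first marginal. -/
def condBary {d : ℕ} (π : Measure (Rd d × Rd d)) [IsFiniteMeasure π] (x : Rd d) : Rd d :=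
  ∫ y, y ∂(π.condKernel x)

/-! ### Couplings by duality -/

theorem exists_linear_section {V E : Type*} [AddCommGroup V] [Module ℝ V] [AddCommGroup E]
    [Module ℝ E] (T : V →ₗ[ℝ] E) :
    ∃ s : LinearMap.range T →ₗ[ℝ] V, ∀ r, T (s r) = r := by
  obtain ⟨s, hs⟩ := T.rangeRestrict.exists_rightInverse_of_surjective T.range_rangeRestrict
  exact ⟨s, fun r => congrArg Subtype.val (LinearMap.congr_fun hs r)⟩

/-- Existence of a coupling with a prescribed cost, in dual form. The hypothesis says that
`f ⊕ g + t k ↦ ∫ f dα + ∫ g dβ + t a` is a positive functional on a subspace of `C(X × X)`; the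
M. Riesz extension theorem extends it to a positive functional on `C(X × X)`, which the
Riesz–Markov–Kakutani theorem represents by a measure. -/
theorem exists_coupling_of_nonneg {X : Type*} [TopologicalSpace X] [CompactSpace X]
    [TopologicalSpace.MetrizableSpace X] [SecondCountableTopology X]
    [MeasurableSpace X] [BorelSpace X]
    (α β : Measure X) [IsProbabilityMeasure α] [IsProbabilityMeasure β]
    (k : C(X × X, ℝ)) (a : ℝ)
    (h : ∀ (f g : C(X, ℝ)) (t : ℝ), (∀ x y, 0 ≤ f x + g y + t * k (x, y)) →
      0 ≤ ∫ x, f x ∂α + ∫ y, g y ∂β + t * a) :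
    ∃ π : Measure (X × X), IsFiniteMeasure π ∧ π.map Prod.fst = α ∧ π.map Prod.snd = β ∧
      ∫ p, k p ∂π = a := by
  have hint : ∀ (κ : Measure X) [IsProbabilityMeasure κ] (f : C(X, ℝ)), Integrable f κ :=
    fun κ _ f => f.continuous.integrable_of_hasCompactSupport (HasCompactSupport.of_compactSpace f)
  let T : (C(X, ℝ) × C(X, ℝ) × ℝ) →ₗ[ℝ] C(X × X, ℝ) :=
    { toFun := fun v => v.1.comp ⟨Prod.fst, continuous_fst⟩ +
        v.2.1.comp ⟨Prod.snd, continuous_snd⟩ + v.2.2 • k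
      map_add' := by
        intro v w; ext p; simp; ring
      map_smul' := by
        intro c v; ext p; simp; ring }
  let L : (C(X, ℝ) × C(X, ℝ) × ℝ) →ₗ[ℝ] ℝ :=
    { toFun := fun v => ∫ x, v.1 x ∂α + ∫ y, v.2.1 y ∂β + v.2.2 * a
      map_add' := by
        intro v w
        simp only [Prod.fst_add, Prod.snd_add, ContinuousMap.add_apply]
        rw [integral_add (hint α _) (hint α _), integral_add (hint β _) (hint β _)]
        ring
      map_smul' := by
        intro c v
        simp only [Prod.smul_fst, Prod.smul_snd, ContinuousMap.smul_apply, smul_eq_mul,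
          integral_const_mul, RingHom.id_apply]
        ring }
  have hT : ∀ v p, T v p = v.1 p.1 + v.2.1 p.2 + v.2.2 * k p := fun v p => rfl
  have hL : ∀ v, L v = ∫ x, v.1 x ∂α + ∫ y, v.2.1 y ∂β + v.2.2 * a := fun v => rfl
  have hpos : ∀ v, 0 ≤ T v → 0 ≤ L v := fun v hv =>
    h v.1 v.2.1 v.2.2 fun x y => hv (x, y)
  have hker : ∀ v, T v = 0 → L v = 0 := fun v hv =>
    le_antisymm (by simpa using hpos (-v) (by simp [hv])) (hpos v hv.ge)
  -- A linear section of `T` over its range transports `L` to a functional on the range.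
  obtain ⟨s, hs'⟩ := exists_linear_section T
  obtain ⟨G, hG, hGpos⟩ := riesz_extension (PointedCone.positive ℝ C(X × X, ℝ))
    ⟨LinearMap.range T, L ∘ₗ s⟩ (fun r hr => hpos _ (by rw [hs']; exact hr))
    (fun y => ⟨⟨T (ContinuousMap.const X ‖y‖, 0, 0), LinearMap.mem_range_self _ _⟩, by
      rw [PointedCone.mem_positive]
      intro p
      have := (abs_le.1 (y.norm_coe_le_norm p)).1
      simp [hT]
      linarith⟩)
  have hGT : ∀ v, G (T v) = L v := fun v => by
    rw [show G (T v) = L (s ⟨T v, _⟩) from hG ⟨T v, LinearMap.mem_range_self _ _⟩, ← sub_eq_zero,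
      ← map_sub]
    exact hker _ (by rw [map_sub, hs', sub_self])
  let Λ : CompactlySupportedContinuousMap (X × X) ℝ →ₚ[ℝ] ℝ :=
    { toFun := fun f => G f.toContinuousMap
      map_add' := fun f g => G.map_add f.toContinuousMap g.toContinuousMap
      map_smul' := fun c f => G.map_smul c f.toContinuousMap
      monotone' := fun f g hfg => by
        have : 0 ≤ G (g.toContinuousMap - f.toContinuousMap) :=
          hGpos _ (by
            rw [PointedCone.mem_positive]
            intro p
            simpa using hfg p)
        rw [map_sub] at this
        exact sub_nonneg.1 this }
  have hΛ : ∀ f : C(X × X, ℝ), ∫ p, f p ∂(RealRMK.rieszMeasure Λ) = G f := fun f =>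
    RealRMK.integral_rieszMeasure Λ ⟨f, HasCompactSupport.of_compactSpace f⟩
  have hTint : ∀ v, ∫ p, T v p ∂(RealRMK.rieszMeasure Λ) = L v := fun v => by
    rw [hΛ, hGT]
  refine ⟨RealRMK.rieszMeasure Λ, inferInstance, ?_, ?_, ?_⟩
  · refine ext_of_forall_integral_eq_of_IsFiniteMeasure fun f => ?_
    rw [integral_map (by fun_prop) (by fun_prop)]
    simpa [hT, hL] using hTint (f.toContinuousMap, 0, 0)
  · refine ext_of_forall_integral_eq_of_IsFiniteMeasure fun f => ?_
    rw [integral_map (by fun_prop) (by fun_prop)]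
    simpa [hT, hL] using hTint (0, f.toContinuousMap, 0)
  · simpa [hT, hL] using hTint (0, 0, 1)

/-! ### Convex order implies Kantorovich dominance -/

theorem integrable_of_compact {d : ℕ} {Ω : Set (Rd d)} (hΩ : IsCompact Ω) (ρ : Measure (Rd d))
    [IsFiniteMeasure ρ] (hρ : ρ Ωᶜ = 0) {F : Type*} [NormedAddCommGroup F] {f : Rd d → F}
    (hf : Continuous f) : Integrable f ρ := by
  rw [← Measure.restrict_eq_self_of_ae_mem (s := Ω) (μ := ρ) hρ]
  exact hf.continuousOn.integrableOn_compact hΩ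

/-- For measures on a compact set with `ν` centered, convex order implies Kantorovich
dominance. The dual condition for the cost
`⟨x, y - x⟩` is checked according to the sign of its multiplier `t`: by centering of `ν` for
`t ≥ 0`, and by testing the convex order on a convex conjugate for `t < 0`. -/
theorem KDom_of_convexOrder {d : ℕ} {Ω : Set (Rd d)} (hΩ : IsCompact Ω) (ρ ν : Measure (Rd d))
    [IsProbabilityMeasure ρ] [IsProbabilityMeasure ν] (hρΩ : ρ Ωᶜ = 0) (hνΩ : ν Ωᶜ = 0)
    (hν0 : (∫ y, y ∂ν) = 0) (hc : ConvexOrder ρ ν) : KDom ρ ν := by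
  have hm := hΩ.measurableSet
  have : CompactSpace Ω := isCompact_iff_compactSpace.mp hΩ
  have hmap : ∀ κ : Measure (Rd d), κ Ωᶜ = 0 →
      (κ.comap (Subtype.val : Ω → Rd d)).map Subtype.val = κ := fun κ hκ => by
    rw [map_comap_subtype_coe hm, Measure.restrict_eq_self_of_ae_mem hκ]
  have hprob : ∀ κ : Measure (Rd d), IsProbabilityMeasure κ → κ Ωᶜ = 0 →
      IsProbabilityMeasure (κ.comap (Subtype.val : Ω → Rd d)) := fun κ _ hκ => by
    refine ⟨?_⟩
    rw [← Set.preimage_univ (f := (Subtype.val : Ω → Rd d)),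
      ← Measure.map_apply measurable_subtype_coe MeasurableSet.univ, hmap κ hκ, measure_univ]
  have hintg : ∀ (κ : Measure (Rd d)), κ Ωᶜ = 0 → ∀ {F : Type} [NormedAddCommGroup F]
      [NormedSpace ℝ F] (f : Rd d → F),
      ∫ x : Ω, f x ∂(κ.comap Subtype.val) = ∫ x, f x ∂κ := fun κ hκ _ _ _ f => by
    rw [integral_subtype_comap hm, Measure.restrict_eq_self_of_ae_mem hκ]
  have hα := hprob ρ inferInstance hρΩ
  have hβ := hprob ν inferInstance hνΩ
  set α := ρ.comap (Subtype.val : Ω → Rd d) with hαdef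
  set β := ν.comap (Subtype.val : Ω → Rd d) with hβdef
  have hne : Nonempty Ω := nonempty_of_isProbabilityMeasure α
  have hint : ∀ (κ : Measure Ω) [IsProbabilityMeasure κ] {F : Type} [NormedAddCommGroup F]
      {f : Ω → F}, Continuous f → Integrable f κ :=
    fun κ _ _ _ f hf => hf.integrable_of_hasCompactSupport (HasCompactSupport.of_compactSpace f)
  obtain ⟨π, hπ, h1, h2, h3⟩ := exists_coupling_of_nonneg α β
    ⟨fun p : Ω × Ω => ⟪(p.1 : Rd d), (p.2 : Rd d) - p.1⟫, by fun_prop⟩ 0 (by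
      intro f g t hfg
      simp only [ContinuousMap.coe_mk] at hfg
      rw [mul_zero, add_zero]
      rcases le_or_gt 0 t with ht | ht
      · -- Integrating in `y` for fixed `x` leaves `f x + ∫ g - t‖x‖² ≥ 0`, as `ν` is centered.
        have key : ∀ x : Ω, 0 ≤ f x + ∫ y, g y ∂β := fun x => by
          have h0 : 0 ≤ ∫ y, (f x + g y + t * ⟪(x : Rd d), (y : Rd d) - x⟫) ∂β :=
            integral_nonneg fun y => hfg x y
          have hy : ∫ y : Ω, ⟪(x : Rd d), (y : Rd d) - x⟫ ∂β = - ‖(x : Rd d)‖ ^ 2 := by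
            rw [integral_inner (hint β (by fun_prop)), integral_sub (hint β (by fun_prop))
              (integrable_const _), hintg ν hνΩ (fun y => y), hν0]
            simp
          rw [integral_add (hint β (by fun_prop)) (hint β (by fun_prop)),
            integral_add (integrable_const _) (hint β (by fun_prop)), integral_const_mul, hy] at h0
          simp only [integral_const, probReal_univ, one_smul] at h0
          nlinarith [mul_nonneg ht (sq_nonneg ‖(x : Rd d)‖)]
        have h0 : 0 ≤ ∫ x, (f x + ∫ y, g y ∂β) ∂α := integral_nonneg key
        rw [integral_add (hint α (by fun_prop)) (integrable_const _)] at h0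
        simpa using h0
      · -- `φ` is the convex conjugate of `f` for the cost `(-t)⟨x, y - x⟩`.
        let F : Ω → Rd d → ℝ := fun x y => (-t) * ⟪(x : Rd d), y - x⟫ - f x
        let φ : Rd d → ℝ := fun y => ⨆ x, F x y
        have hbdd : ∀ y, BddAbove (Set.range fun x => F x y) := fun y =>
          (isCompact_range (by fun_prop)).bddAbove
        have hle : ∀ x y, F x y ≤ φ y := fun x y => le_ciSup (hbdd y) x
        have hconv : ConvexOn ℝ Set.univ φ := by
          refine ⟨convex_univ, fun y _ z _ a b ha hb hab => ciSup_le fun x => ?_⟩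
          have e : F x (a • y + b • z) = a * F x y + b * F x z := by
            simp only [F, inner_sub_right, inner_add_right, inner_smul_right]
            linear_combination (-t * ⟪(x : Rd d), (x : Rd d)⟫ + f x) * hab
          rw [e, smul_eq_mul, smul_eq_mul]
          gcongr <;> exact hle _ _
        have hφ : Continuous φ := hconv.locallyLipschitz.continuous
        have hord := hc φ hconv (integrable_of_compact hΩ ρ hρΩ hφ)
          (integrable_of_compact hΩ ν hνΩ hφ)
        rw [← hintg ρ hρΩ, ← hintg ν hνΩ] at hord
        have hg : ∫ y : Ω, φ y ∂β ≤ ∫ y, g y ∂β :=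
          integral_mono (hint β (by fun_prop)) (hint β (by fun_prop)) fun y =>
            ciSup_le fun x => by
              have := hfg x y
              simp only [F]
              linarith
        have hf : ∫ x, -f x ∂α ≤ ∫ x : Ω, φ x ∂α :=
          integral_mono (hint α (by fun_prop)) (hint α (by fun_prop)) fun x => by
            simpa [F] using hle x x
        rw [integral_neg] at hf
        linarith)
  refine ⟨π.map (Prod.map Subtype.val Subtype.val), ⟨?_, ?_⟩, ?_⟩
  · rw [Measure.map_map (by fun_prop) (by fun_prop),
      show Prod.fst ∘ Prod.map (Subtype.val : Ω → Rd d) (Subtype.val : Ω → Rd d)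
        = Subtype.val ∘ Prod.fst from rfl,
      ← Measure.map_map (by fun_prop) (by fun_prop), h1, hmap ρ hρΩ]
  · rw [Measure.map_map (by fun_prop) (by fun_prop),
      show Prod.snd ∘ Prod.map (Subtype.val : Ω → Rd d) (Subtype.val : Ω → Rd d)
        = Subtype.val ∘ Prod.snd from rfl,
      ← Measure.map_map (by fun_prop) (by fun_prop), h2, hmap ν hνΩ]
  · rw [integral_map (by fun_prop) (by fun_prop), hν0]
    simpa using h3

/-! ### Conditional barycenters and variance -/

theorem integrable_inner_of_memLp_s19 {A : Type*} [MeasurableSpace A] {κ : Measure A} {d : ℕ}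
    {f g : A → Rd d} (hf : MemLp f 2 κ) (hg : MemLp g 2 κ) :
    Integrable (fun a => ⟪f a, g a⟫) κ :=
  (hf.norm.integrable_mul hg.norm).mono' (hf.1.inner hg.1)
    (ae_of_all _ fun _ => norm_inner_le_norm _ _)

theorem measurable_condBary {d : ℕ} (π : Measure (Rd d × Rd d)) [IsFiniteMeasure π] :
    Measurable (condBary π) :=
  (StronglyMeasurable.integral_kernel (κ := π.condKernel) stronglyMeasurable_id).measurable

/-- Conditioning on the first coordinate replaces the second coordinate by its conditional
barycenter. -/
theorem integral_inner_condBary {d : ℕ} (π : Measure (Rd d × Rd d)) [IsFiniteMeasure π]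
    {g : Rd d → Rd d} (hg : MemLp (fun p : Rd d × Rd d => g p.1) 2 π)
    (hy : MemLp (fun p : Rd d × Rd d => p.2) 2 π) :
    ∫ p, ⟪g p.1, p.2⟫ ∂π = ∫ x, ⟪g x, condBary π x⟫ ∂(π.map Prod.fst) := by
  rw [← Measure.integral_condKernel (integrable_inner_of_memLp_s19 hg hy)]
  refine integral_congr_ae ?_
  filter_upwards [(hy.integrable one_le_two).condKernel_ae] with x hx
  exact integral_inner hx (g x)

/-- A coupling whose conditional barycenter map is the identity (a martingale coupling) witnesses
the convex order, by Jensen's inequality for the conditional laws. -/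
theorem convexOrder_of_condBary_eq {d : ℕ} {μ ν : Measure (Rd d)} (π : Measure (Rd d × Rd d))
    [IsFiniteMeasure π] (hπ : IsCoupling π μ ν)
    (hy : Integrable (fun p : Rd d × Rd d => p.2) π) (hc : ∀ᵐ x ∂μ, condBary π x = x) :
    ConvexOrder μ ν := by
  obtain ⟨rfl, rfl⟩ := hπ
  intro f hf hfμ hfν
  have hcont : Continuous f := hf.locallyLipschitz.continuous
  have hfπ : Integrable (fun p : Rd d × Rd d => f p.2) π := hfν.comp_measurable measurable_snd
  rw [integral_map (φ := Prod.snd) (by fun_prop) (by fun_prop), ← Measure.integral_condKernel hfπ]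
  refine integral_mono_ae hfμ hfπ.integral_condKernel ?_
  filter_upwards [hc, hy.condKernel_ae, hfπ.condKernel_ae] with x hx hxy hxf
  have := hf.map_integral_le hcont.continuousOn isClosed_univ (by simp) hxy hxf
  rwa [show ∫ y, y ∂(π.condKernel x) = x from hx] at this

theorem Var_eq {d : ℕ} (μ : Measure (Rd d)) [IsProbabilityMeasure μ] (h2 : FiniteSecondMoment μ) :
    Var μ = ∫ x, ‖x‖ ^ 2 ∂μ - ‖∫ x, x ∂μ‖ ^ 2 := by
  have hL : MemLp (fun x : Rd d => x) 2 μ := (memLp_two_iff_integrable_sq_norm (by fun_prop)).2 h2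
  have hi := hL.integrable one_le_two
  unfold Var
  generalize hb : ∫ x, x ∂μ = b
  simp_rw [norm_sub_sq_real, real_inner_comm b]
  have h2' : Integrable (fun x : Rd d => ‖x‖ ^ 2) μ := h2
  have hib : Integrable (fun x : Rd d => 2 * ⟪b, x⟫) μ := (hi.const_inner b).const_mul 2
  rw [integral_add (by exact h2'.sub hib) (integrable_const _), integral_sub h2' hib, integral_const_mul,
    integral_inner hi, hb]
  simp only [integral_const, probReal_univ, one_smul, real_inner_self_eq_norm_sq]
  ring

/-- If `D ⊆ P₂(Ω)` is closed under weak optimizers, then every maximizer `μ` of `Var` over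
`D ∩ M_{ν,Ω}^K` satisfies `μ ≤_c ν`, and consequently solves
`max { Var(μ) : μ ∈ D, μ ≤_c ν }`. -/
theorem stmt_19 {d : ℕ} (Ω : Set (Rd d)) (hΩc : IsCompact Ω) (hΩconv : Convex ℝ Ω)
    (hΩ0 : (0 : Rd d) ∈ Ω)
    (ν : Measure (Rd d)) [IsProbabilityMeasure ν] (hν2 : FiniteSecondMoment ν)
    (hνΩ : ν Ωᶜ = 0) (hν0 : (∫ y, y ∂ν) = 0)
    (D : Set (Measure (Rd d)))
    (hD : ∀ ρ ∈ D, IsProbabilityMeasure ρ ∧ FiniteSecondMoment ρ ∧ ρ Ωᶜ = 0)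
    (hweak : ∀ μ ∈ D, MemMK Ω ν μ → (∀ ρ ∈ D, MemMK Ω ν ρ → Var ρ ≤ Var μ) →
      ∃ (π : Measure (Rd d × Rd d)) (_ : IsFiniteMeasure π), IsCoupling π μ ν ∧
        (∫ x, ‖x‖ ^ 2 ∂μ) ≤ (∫ p : Rd d × Rd d, ⟪p.1, p.2⟫ ∂π) ∧
        μ.map (condBary π) ∈ D)
    (μ : Measure (Rd d)) (hμD : μ ∈ D) (hμM : MemMK Ω ν μ)
    (hmax : ∀ ρ ∈ D, MemMK Ω ν ρ → Var ρ ≤ Var μ) :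
    ConvexOrder μ ν ∧ ∀ ρ ∈ D, ConvexOrder ρ ν → Var ρ ≤ Var μ := by
  refine ⟨?_, fun ρ hρ hc => ?_⟩
  swap
  · obtain ⟨h1, h2, h3⟩ := hD ρ hρ
    exact hmax ρ hρ ⟨h1, h2, h3, KDom_of_convexOrder hΩc ρ ν h3 hνΩ hν0 hc⟩
  obtain ⟨π, _, hπ, hle, hcD⟩ := hweak μ hμD hμM hmax
  obtain ⟨hμp, hμ2, hμΩ, -⟩ := hμM
  obtain ⟨hρp, hρ2, hρΩ⟩ := hD _ hcD
  set c := condBary π with hcdef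
  have hcm : Measurable c := measurable_condBary π
  have hπ1 : MeasurePreserving Prod.fst π μ := ⟨measurable_fst, hπ.1⟩
  have hπ2 : MeasurePreserving Prod.snd π ν := ⟨measurable_snd, hπ.2⟩
  have hxμ : MemLp (fun x : Rd d => x) 2 μ :=
    (memLp_two_iff_integrable_sq_norm (by fun_prop)).2 hμ2
  have hcμ : MemLp c 2 μ := (memLp_two_iff_integrable_sq_norm hcm.aestronglyMeasurable).2
    (Integrable.comp_measurable (g := fun x : Rd d => ‖x‖ ^ 2) hρ2 hcm)
  have hyν : MemLp (fun x : Rd d => x) 2 ν :=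
    (memLp_two_iff_integrable_sq_norm (by fun_prop)).2 hν2
  have hx : MemLp (fun p : Rd d × Rd d => p.1) 2 π := hxμ.comp_measurePreserving hπ1
  have hcπ : MemLp (fun p : Rd d × Rd d => c p.1) 2 π := hcμ.comp_measurePreserving hπ1
  have hy : MemLp (fun p : Rd d × Rd d => p.2) 2 π := hyν.comp_measurePreserving hπ2
  have hxc : ∫ p : Rd d × Rd d, ⟪p.1, p.2⟫ ∂π = ∫ x, ⟪x, c x⟫ ∂μ := by
    rw [integral_inner_condBary π (g := fun x => x) hx hy, hπ.1]
  have hcc : ∫ p : Rd d × Rd d, ⟪c p.1, p.2⟫ ∂π = ∫ x, ‖c x‖ ^ 2 ∂μ := by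
    rw [integral_inner_condBary π hcπ hy, hπ.1]
    simp [hcdef]
  have hcsq : Integrable (fun x => ‖c x‖ ^ 2) μ :=
    (memLp_two_iff_integrable_sq_norm hcm.aestronglyMeasurable).1 hcμ
  -- `(c, id)_# π` couples `c_# μ` to `ν`, so `c_# μ` is admissible.
  have hK : KDom (μ.map c) ν := by
    refine ⟨π.map fun p => (c p.1, p.2), ⟨?_, ?_⟩, ?_⟩
    · rw [Measure.map_map (by fun_prop) (by fun_prop), ← hπ.1,
        Measure.map_map (by fun_prop) (by fun_prop)]
      rfl
    · rw [Measure.map_map (by fun_prop) (by fun_prop)]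
      exact hπ.2
    · rw [integral_map (by fun_prop) (by fun_prop), hν0]
      simp only [sub_zero, inner_sub_right, real_inner_self_eq_norm_sq]
      rw [integral_sub (integrable_inner_of_memLp_s19 hcπ hy)
        ((memLp_two_iff_integrable_sq_norm hcπ.1).1 hcπ), hcc, ← hπ.1,
        integral_map (by fun_prop) (by fun_prop), sub_self]
  have hvar := hmax _ hcD ⟨hρp, hρ2, hρΩ, hK⟩
  have hbary : ∫ x, x ∂(μ.map c) = 0 := by
    rw [integral_map (by fun_prop) (by fun_prop), ← hν0, ← hπ.2,
      integral_map (by fun_prop) (by fun_prop),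
      ← Measure.integral_condKernel (hy.integrable one_le_two), ← hπ.1]
    rfl
  rw [Var_eq _ hρ2, Var_eq μ hμ2, hbary, integral_map (by fun_prop) (by fun_prop)] at hvar
  have hxci : Integrable (fun x => 2 * ⟪x, c x⟫) μ :=
    (integrable_inner_of_memLp_s19 hxμ hcμ).const_mul 2
  have hdiff : Integrable (fun x => ‖x - c x‖ ^ 2) μ :=
    (memLp_two_iff_integrable_sq_norm (by fun_prop)).1 (hxμ.sub hcμ)
  have hμ2' : Integrable (fun x : Rd d => ‖x‖ ^ 2) μ := hμ2
  have hexp : ∫ x, ‖x - c x‖ ^ 2 ∂μ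
      = ∫ x, ‖x‖ ^ 2 ∂μ - 2 * ∫ x, ⟪x, c x⟫ ∂μ + ∫ x, ‖c x‖ ^ 2 ∂μ := by
    simp_rw [norm_sub_sq_real]
    rw [integral_add (by exact hμ2'.sub hxci) hcsq, integral_sub hμ2' hxci, integral_const_mul]
  -- `∫ |x - c|² ≤ ∫ |c|² - ∫ |x|² = Var (c_# μ) - ∫ |x|² ≤ Var μ - ∫ |x|² ≤ 0`.
  have hzero : ∫ x, ‖x - c x‖ ^ 2 ∂μ = 0 := by
    refine le_antisymm ?_ (integral_nonneg fun x => by positivity)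
    rw [hxc] at hle
    rw [norm_zero] at hvar
    nlinarith [sq_nonneg ‖∫ x, x ∂μ‖]
  rw [integral_eq_zero_iff_of_nonneg (fun x => by positivity) hdiff] at hzero
  refine convexOrder_of_condBary_eq π hπ (hy.integrable one_le_two) ?_
  filter_upwards [hzero] with x hx0
  have : x - c x = 0 := by simpa using hx0
  exact (sub_eq_zero.1 this).symm
end
end
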